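/- arXiv:0801.3714 — 2 statements merged into one kernel-verified Lean document; each statement's English description precedes it below -/
import Mathlib

section
/- Let G be a connected bridgeless cubic graph in which every 2-factor consists only of 5-cycles. Then G does not contain two triangles sharing an edge. -/
/-! Multigraphs: vertex type `V`, edge type `E`, incidence map `ends : E → Sym2 V`. -/

namespace Mg

variable {V E : Type}

/-- No loops: no edge has equal endpoints. -/
def NoLoops (ends : E → Sym2 V) : Prop := ∀ e, ¬ (ends e).IsDiag

/-- Cubic: every vertex is incident with exactly three edges. -/
def IsCubic (ends : E → Sym2 V) : Prop := ∀ v, {e | v ∈ ends e}.ncard = 3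

/-- Reachability using only edges in `F`. -/
def Reach (ends : E → Sym2 V) (F : Set E) : V → V → Prop :=
  Relation.ReflTransGen (fun a b => ∃ e ∈ F, ends e = s(a, b))

/-- Connected. -/
def Connected (ends : E → Sym2 V) : Prop := ∀ v w, Reach ends Set.univ v w

/-- Bridgeless: the endpoints of each edge remain joined after its removal. -/
def Bridgeless (ends : E → Sym2 V) : Prop :=
  ∀ e v w, ends e = s(v, w) → Reach ends {f | f ≠ e} v w

/-- A 2-factor: every vertex is incident with exactly two edges of `F`. -/
def IsTwoFactor (ends : E → Sym2 V) (F : Set E) : Prop :=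
  ∀ v, {e | e ∈ F ∧ v ∈ ends e}.ncard = 2

/-- The component of `v` in the spanning subgraph with edge set `F`. -/
def component (ends : E → Sym2 V) (F : Set E) (v : V) : Set V := {w | Reach ends F v w}

/-- Every 2-factor consists only of 5-cycles: each component of any 2-factor
has exactly five vertices. -/
def TwoFactorsAllC5 (ends : E → Sym2 V) : Prop :=
  ∀ F : Set E, IsTwoFactor ends F → ∀ v, (component ends F v).ncard = 5

/-- A perfect matching: every vertex is incident with exactly one edge of `M`. -/
def IsPerfectMatching (ends : E → Sym2 V) (M : Set E) : Prop :=
  ∀ v, ∃! e, e ∈ M ∧ v ∈ ends e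

/-- A cycle of length `n`: `n` distinct vertices and `n` distinct edges, cyclically. -/
def HasCycle (ends : E → Sym2 V) (n : ℕ) : Prop :=
  ∃ (c : ZMod n → V) (f : ZMod n → E), Function.Injective c ∧ Function.Injective f ∧
    ∀ i, ends (f i) = s(c i, c (i + 1))

end Mg

/-!
Let `S` be a set of vertices of a cubic graph. Counting incidences gives `3|S| = 2i + d`, where `i`
edges lie inside `S` and `d` edges leave `S`. If `|S|` is odd then so is `d`, and `d ≠ 1` because
there is no bridge, so `d ≥ 3`.

Hence a 2-factor exists (Petersen): deleting a vertex set `u` leaves at most `|u|` odd components,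
since each of them sends at least three edges to `u`, while `u` meets at most `3|u|` edges. So
Tutte's condition holds, and the complement of a perfect matching is a 2-factor.

Also, a component of a 2-factor with an odd number `n` of vertices has at most `(n - 3) / 2` chords,
so a 5-cycle has at most one. This excludes two triangles `a b p` and `a b q` with `p ≠ q`: if the
2-factor avoids `ab`, one of its components is the 4-cycle `a p b q`; if it contains `ab`, then, up
to exchanging `p` and `q`, its component runs through `q a b p` and has the two chords `ap`, `bq`.
Finally `p = q` would make the two triangles equal, as a set of three vertices spans at most three
edges.
-/

namespace Mg

variable {V E : Type} {ends : E → Sym2 V} {F : Set E} {S T u : Set V} {v : V}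

/-- The edges with one end in `S` and the other outside `S`; the oriented pair `(v, w)` records
which end lies in `S`. -/
def cut (ends : E → Sym2 V) (S : Set V) : Set E :=
  {e | ∃ v w, ends e = s(v, w) ∧ v ∈ S ∧ w ∉ S}

/-- The edges of the subgraph induced on `S`. For a component `S` of a 2-factor `F`, those outside
`F` are its chords. -/
def edgesWithin (ends : E → Sym2 V) (S : Set V) : Set E :=
  {e | ∀ v ∈ ends e, v ∈ S}

theorem exists_ends_eq (ends : E → Sym2 V) (e : E) : ∃ v w, ends e = s(v, w) :=
  Sym2.exists.1 ⟨ends e, rfl⟩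

theorem disjoint_edgesWithin_cut : Disjoint (edgesWithin ends S) (cut ends S) := by
  rw [Set.disjoint_left]
  rintro e hwithin ⟨v, w, he, -, hw⟩
  exact hw (hwithin w (by simp [he]))

theorem exists_mem_iff_mem_edgesWithin_union_cut {e : E} :
    (∃ v ∈ S, v ∈ ends e) ↔ e ∈ edgesWithin ends S ∪ cut ends S := by
  constructor
  · rintro ⟨v, hv, hve⟩
    obtain ⟨w, he⟩ := Sym2.mem_iff_exists.1 hve
    by_cases hw : w ∈ S
    · left
      intro x hx
      rw [he, Sym2.mem_iff] at hx
      rcases hx with rfl | rfl <;> assumption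
    · exact Or.inr ⟨v, w, he, hv, hw⟩
  · rintro (hwithin | ⟨v, w, he, hv, -⟩)
    · obtain ⟨v, w, he⟩ := exists_ends_eq ends e
      have hve : v ∈ ends e := by simp [he]
      exact ⟨v, hwithin v hve, hve⟩
    · exact ⟨v, hv, by simp [he]⟩

theorem finite_inter_edgesWithin_union_cut {k : ℕ} (hk : k ≠ 0) (hS : S.Finite)
    (hF : ∀ v ∈ S, {e | e ∈ F ∧ v ∈ ends e}.ncard = k) :
    (F ∩ (edgesWithin ends S ∪ cut ends S)).Finite := by
  refine (hS.biUnion fun v hv =>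
    Set.finite_of_ncard_ne_zero ((hF v hv).trans_ne hk)).subset fun e ⟨heF, he⟩ => ?_
  obtain ⟨v, hv, hve⟩ := exists_mem_iff_mem_edgesWithin_union_cut.2 he
  exact Set.mem_biUnion hv ⟨heF, hve⟩

theorem ncard_inter_ends_of_mem_edgesWithin (hl : NoLoops ends) {e : E}
    (he : e ∈ edgesWithin ends S) : {v | v ∈ S ∧ v ∈ ends e}.ncard = 2 := by
  obtain ⟨v, w, hvw⟩ := exists_ends_eq ends e
  refine Set.ncard_eq_two.2 ⟨v, w, ?_, ?_⟩
  · simpa [hvw] using hl e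
  · ext x
    have hx := he x
    simp only [hvw, Sym2.mem_iff, Set.mem_ofPred_eq, Set.mem_insert_iff,
      Set.mem_singleton_iff] at hx ⊢
    tauto

theorem ncard_inter_ends_of_mem_cut {e : E} (he : e ∈ cut ends S) :
    {v | v ∈ S ∧ v ∈ ends e}.ncard = 1 := by
  obtain ⟨v, w, hvw, hv, hw⟩ := he
  refine Set.ncard_eq_one.2 ⟨v, ?_⟩
  ext x
  simp only [hvw, Sym2.mem_iff, Set.mem_ofPred_eq, Set.mem_singleton_iff]
  grind

theorem sum_ncard_edges_eq_sum_ncard_ends (S : Finset V) (T : Finset E) :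
    ∑ v ∈ S, {e | e ∈ T ∧ v ∈ ends e}.ncard = ∑ e ∈ T, {v | v ∈ S ∧ v ∈ ends e}.ncard := by
  classical
  simpa [← Set.ncard_coe_finset] using
    Finset.sum_card_bipartiteAbove_eq_sum_card_bipartiteBelow (s := S) (t := T)
      fun v e => v ∈ ends e

theorem mul_ncard_eq_two_mul_ncard_edgesWithin_add_ncard_cut (hl : NoLoops ends) {k : ℕ}
    (hk : k ≠ 0) (hS : S.Finite) (hF : ∀ v ∈ S, {e | e ∈ F ∧ v ∈ ends e}.ncard = k) :
    k * S.ncard = 2 * (F ∩ edgesWithin ends S).ncard + (F ∩ cut ends S).ncard := by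
  have hfin := finite_inter_edgesWithin_union_cut hk hS hF
  rw [Set.inter_union_distrib_left, Set.finite_union] at hfin
  obtain ⟨hwithin, hcut⟩ := hfin
  have hdisj : Disjoint hwithin.toFinset hcut.toFinset := by
    rw [Set.Finite.disjoint_toFinset]
    exact disjoint_edgesWithin_cut.mono Set.inter_subset_right Set.inter_subset_right
  have hdegree : ∀ v ∈ hS.toFinset,
      {e | e ∈ hwithin.toFinset.disjUnion hcut.toFinset hdisj ∧ v ∈ ends e}.ncard = k := by
    intro v hv
    rw [hS.mem_toFinset] at hv
    rw [← hF v hv]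
    congr 1
    ext e
    have hincident := exists_mem_iff_mem_edgesWithin_union_cut (ends := ends) (S := S) (e := e)
    simp only [Finset.mem_disjUnion, Set.Finite.mem_toFinset, Set.mem_inter_iff,
      Set.mem_ofPred_eq]
    grind
  calc k * S.ncard
      = ∑ v ∈ hS.toFinset,
          {e | e ∈ hwithin.toFinset.disjUnion hcut.toFinset hdisj ∧ v ∈ ends e}.ncard := by
        rw [Finset.sum_congr rfl hdegree, Finset.sum_const, smul_eq_mul, mul_comm,
          Set.ncard_eq_toFinset_card S hS]
    _ = ∑ e ∈ hwithin.toFinset, {v | v ∈ S ∧ v ∈ ends e}.ncard +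
          ∑ e ∈ hcut.toFinset, {v | v ∈ S ∧ v ∈ ends e}.ncard := by
        simp only [sum_ncard_edges_eq_sum_ncard_ends, Finset.sum_disjUnion, hS.mem_toFinset]
    _ = ∑ e ∈ hwithin.toFinset, 2 + ∑ e ∈ hcut.toFinset, 1 := by
        congr 1 <;> refine Finset.sum_congr rfl fun e he => ?_
        · exact ncard_inter_ends_of_mem_edgesWithin hl (hwithin.mem_toFinset.1 he).2
        · exact ncard_inter_ends_of_mem_cut (hcut.mem_toFinset.1 he).2
    _ = 2 * (F ∩ edgesWithin ends S).ncard + (F ∩ cut ends S).ncard := by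
        rw [Set.ncard_eq_toFinset_card _ hwithin, Set.ncard_eq_toFinset_card _ hcut]
        simp [mul_comm]

theorem IsCubic.three_mul_ncard_eq (hc : IsCubic ends) (hl : NoLoops ends) (hS : S.Finite) :
    3 * S.ncard = 2 * (edgesWithin ends S).ncard + (cut ends S).ncard := by
  simpa using mul_ncard_eq_two_mul_ncard_edgesWithin_add_ncard_cut (F := Set.univ) hl
    three_ne_zero hS fun v _ => by simpa using hc v

theorem IsTwoFactor.two_mul_ncard_eq (hF : IsTwoFactor ends F) (hl : NoLoops ends)
    (hS : S.Finite) :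
    2 * S.ncard = 2 * (F ∩ edgesWithin ends S).ncard + (F ∩ cut ends S).ncard :=
  mul_ncard_eq_two_mul_ncard_edgesWithin_add_ncard_cut hl two_ne_zero hS fun v _ => hF v

theorem IsCubic.finite_edgesWithin_union_cut (hc : IsCubic ends) (hS : S.Finite) :
    (edgesWithin ends S ∪ cut ends S).Finite := by
  simpa using finite_inter_edgesWithin_union_cut (F := Set.univ) three_ne_zero hS
    fun v _ => by simpa using hc v

theorem IsCubic.finite_edgesWithin (hc : IsCubic ends) (hS : S.Finite) :
    (edgesWithin ends S).Finite :=
  (hc.finite_edgesWithin_union_cut hS).subset Set.subset_union_left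

theorem IsCubic.finite_cut (hc : IsCubic ends) (hS : S.Finite) : (cut ends S).Finite :=
  (hc.finite_edgesWithin_union_cut hS).subset Set.subset_union_right

theorem component_subset (hv : v ∈ S) (hcut : F ∩ cut ends S = ∅) : component ends F v ⊆ S := by
  intro w hw
  induction hw with
  | refl => exact hv
  | tail _ hstep hS =>
    obtain ⟨e, heF, he⟩ := hstep
    by_contra hw
    exact (Set.ext_iff.1 hcut e).1 ⟨heF, _, _, he, hS, hw⟩

theorem mem_component_of_mem {e : E} {x y : V} (he : e ∈ F) (hxy : ends e = s(x, y))
    (hx : x ∈ component ends F v) : y ∈ component ends F v :=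
  Relation.ReflTransGen.tail hx ⟨e, he, hxy⟩

theorem inter_cut_component : F ∩ cut ends (component ends F v) = ∅ := by
  rw [Set.eq_empty_iff_forall_notMem]
  rintro e ⟨heF, x, y, he, hx, hy⟩
  exact hy (mem_component_of_mem heF he hx)

theorem Bridgeless.ncard_cut_ne_one (hb : Bridgeless ends) : (cut ends S).ncard ≠ 1 := by
  intro hone
  obtain ⟨e, hcut⟩ := Set.ncard_eq_one.1 hone
  obtain ⟨v, w, he, hv, hw⟩ : e ∈ cut ends S := by simp [hcut]
  exact hw (component_subset hv (by grind) (hb e v w he))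

theorem three_le_ncard_cut (hl : NoLoops ends) (hc : IsCubic ends) (hb : Bridgeless ends)
    (hS : Odd S.ncard) : 3 ≤ (cut ends S).ncard := by
  have hcount := hc.three_mul_ncard_eq hl (Set.finite_of_ncard_pos hS.pos)
  have hne := hb.ncard_cut_ne_one (S := S)
  obtain ⟨n, hn⟩ := hS
  omega

theorem two_mul_ncard_edgesWithin_add_three_le (hl : NoLoops ends) (hc : IsCubic ends)
    (hb : Bridgeless ends) (hS : Odd S.ncard) :
    2 * (edgesWithin ends S).ncard + 3 ≤ 3 * S.ncard := by
  have hcount := hc.three_mul_ncard_eq hl (Set.finite_of_ncard_pos hS.pos)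
  have hcut := three_le_ncard_cut hl hc hb hS
  omega

theorem IsTwoFactor.ncard_inter_edgesWithin_component (hF : IsTwoFactor ends F)
    (hl : NoLoops ends) (hfin : (component ends F v).Finite) :
    (F ∩ edgesWithin ends (component ends F v)).ncard = (component ends F v).ncard := by
  have hcount := hF.two_mul_ncard_eq hl hfin
  rw [inter_cut_component, Set.ncard_empty] at hcount
  omega

theorem IsTwoFactor.two_mul_ncard_chords_add_three_le (hF : IsTwoFactor ends F)
    (hl : NoLoops ends) (hc : IsCubic ends) (hb : Bridgeless ends)
    (hodd : Odd (component ends F v).ncard) :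
    2 * (edgesWithin ends (component ends F v) \ F).ncard + 3 ≤ (component ends F v).ncard := by
  have hfin : (component ends F v).Finite := Set.finite_of_ncard_pos hodd.pos
  have hwithin := two_mul_ncard_edgesWithin_add_three_le hl hc hb hodd
  have hcycle := hF.ncard_inter_edgesWithin_component hl hfin
  have hsplit := Set.ncard_inter_add_ncard_sdiff_eq_ncard (edgesWithin ends (component ends F v)) F
    (hc.finite_edgesWithin hfin)
  rw [Set.inter_comm] at hsplit
  omega

theorem IsTwoFactor.component_subset_of_ncard_le (hF : IsTwoFactor ends F) (hl : NoLoops ends)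
    (hfin : S.Finite) (hv : v ∈ S) (hle : S.ncard ≤ (F ∩ edgesWithin ends S).ncard) :
    component ends F v ⊆ S := by
  have hcount := hF.two_mul_ncard_eq hl hfin
  have hcutfin : (F ∩ cut ends S).Finite :=
    (finite_inter_edgesWithin_union_cut two_ne_zero hfin fun v _ => hF v).subset (by grind)
  exact component_subset hv ((Set.ncard_eq_zero hcutfin).1 (by omega))

theorem isTwoFactor_iff_isPerfectMatching_compl (hc : IsCubic ends) :
    IsTwoFactor ends F ↔ IsPerfectMatching ends Fᶜ := by
  refine forall_congr' fun v => ?_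
  have hsplit := Set.ncard_inter_add_ncard_sdiff_eq_ncard {e | v ∈ ends e} F
    (Set.finite_of_ncard_ne_zero (by simp [hc v]))
  have hmem : {e | v ∈ ends e} ∩ F = {e | e ∈ F ∧ v ∈ ends e} := Set.ext fun _ => and_comm
  have hcompl : (∃! e, e ∈ Fᶜ ∧ v ∈ ends e) ↔ ({e | v ∈ ends e} \ F).ncard = 1 := by
    simp only [ExistsUnique, Set.ncard_eq_one, Set.eq_singleton_iff_unique_mem, Set.mem_sdiff,
      Set.mem_ofPred_eq, Set.mem_compl_iff, and_comm (b := v ∈ ends _)]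
  rw [hcompl, ← hmem]
  have hdegree := hc v
  omega

theorem disjoint_cut_of_disjoint (hST : Disjoint S T) (hTu : Disjoint T u)
    (hS : ∀ e v w, ends e = s(v, w) → v ∈ S → w ∉ S → w ∈ u) :
    Disjoint (cut ends S) (cut ends T) := by
  rw [Set.disjoint_left]
  rintro e ⟨v, w, he, hv, hw⟩ heT
  obtain ⟨x, hx, hxe⟩ := exists_mem_iff_mem_edgesWithin_union_cut.2 (Or.inr heT)
  rw [he, Sym2.mem_iff] at hxe
  rcases hxe with rfl | rfl
  · exact hST.notMem_of_mem_left hv hx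
  · exact hTu.notMem_of_mem_left hx (hS e v x he hv hw)

theorem cut_subset_cut (hSu : Disjoint S u)
    (hS : ∀ e v w, ends e = s(v, w) → v ∈ S → w ∉ S → w ∈ u) :
    cut ends S ⊆ cut ends u := by
  rintro e ⟨v, w, he, hv, hw⟩
  exact ⟨w, v, he.trans Sym2.eq_swap, hS e v w he hv hw, hSu.notMem_of_mem_left hv⟩

theorem card_odd_sets_le_ncard_separator (hl : NoLoops ends) (hc : IsCubic ends)
    (hb : Bridgeless ends) (hu : u.Finite) {ι : Type*} {I : Finset ι} {S : ι → Set V}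
    (hodd : ∀ i ∈ I, Odd (S i).ncard) (hdisj : (I : Set ι).PairwiseDisjoint S)
    (hSu : ∀ i ∈ I, Disjoint (S i) u)
    (hS : ∀ i ∈ I, ∀ e v w, ends e = s(v, w) → v ∈ S i → w ∉ S i → w ∈ u) :
    I.card ≤ u.ncard := by
  have hfin : (cut ends u).Finite := hc.finite_cut hu
  have hsub : ∀ i ∈ I, cut ends (S i) ⊆ cut ends u := fun i hi =>
    cut_subset_cut (hSu i hi) (hS i hi)
  have hcuts : (I : Set ι).PairwiseDisjoint fun i => cut ends (S i) := fun i hi j hj hij =>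
    disjoint_cut_of_disjoint (hdisj hi hj hij) (hSu j hj) (hS i hi)
  have hcount := hc.three_mul_ncard_eq hl hu
  have hle : I.card * 3 ≤ (cut ends u).ncard :=
    calc I.card * 3 ≤ ∑ i ∈ I, (cut ends (S i)).ncard :=
          Finset.card_nsmul_le_sum I _ 3 fun i hi => three_le_ncard_cut hl hc hb (hodd i hi)
      _ = (⋃ i ∈ I, cut ends (S i)).ncard := by
          rw [← finsum_mem_coe_finset, ← I.finite_toSet.ncard_biUnion
            (fun i hi => hfin.subset (hsub i hi)) hcuts]
          rfl
      _ ≤ (cut ends u).ncard := Set.ncard_le_ncard (Set.iUnion₂_subset hsub) hfin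
  omega

/-- The simple graph obtained by merging parallel edges, to which Mathlib's form of Tutte's theorem
applies. -/
def toSimpleGraph (ends : E → Sym2 V) (hl : NoLoops ends) : SimpleGraph V where
  Adj v w := ∃ e, ends e = s(v, w)
  symm := ⟨fun _ _ ⟨e, he⟩ => ⟨e, he.trans Sym2.eq_swap⟩⟩
  loopless := ⟨fun _ ⟨e, he⟩ => hl e (by simp [he])⟩

theorem mem_of_leaves_component_deleteVerts (hl : NoLoops ends)
    (C : ((⊤ : (toSimpleGraph ends hl).Subgraph).deleteVerts u).coe.ConnectedComponent)
    {e : E} {v w : V} (he : ends e = s(v, w)) (hv : v ∈ Subtype.val '' C.supp)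
    (hw : w ∉ Subtype.val '' C.supp) : w ∈ u := by
  obtain ⟨⟨v, hvH⟩, hvC, rfl⟩ := hv
  by_contra hwu
  have hvu : v ∉ u := by simpa using hvH
  refine hw ⟨⟨w, by simpa using hwu⟩, C.mem_supp_of_adj_mem_supp hvC ?_, rfl⟩
  simpa [hwu, hvu] using ⟨e, he⟩

theorem not_isTutteViolator_toSimpleGraph [Finite V] (hl : NoLoops ends) (hc : IsCubic ends)
    (hb : Bridgeless ends) (u : Set V) : ¬ (toSimpleGraph ends hl).IsTutteViolator u := by
  rw [SimpleGraph.IsTutteViolator, not_lt]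
  set H := ((⊤ : (toSimpleGraph ends hl).Subgraph).deleteVerts u).coe
  rw [Set.ncard_eq_toFinset_card H.oddComponents]
  refine card_odd_sets_le_ncard_separator hl hc hb u.toFinite
    (S := fun C => Subtype.val '' C.supp) (fun C hC => ?_) (fun C _ D _ hCD => ?_)
    (fun C _ => ?_) fun C _ e v w => mem_of_leaves_component_deleteVerts hl C
  · rw [Set.ncard_image_of_injective _ Subtype.val_injective]
    simpa using hC
  · exact (Set.disjoint_image_iff Subtype.val_injective).2
      (H.pairwise_disjoint_supp_connectedComponent hCD)
  · rw [Set.disjoint_left]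
    rintro _ ⟨v, -, rfl⟩
    simpa using v.2

theorem exists_isPerfectMatching [Finite V] (hl : NoLoops ends) (hc : IsCubic ends)
    (hb : Bridgeless ends) : ∃ M : Set E, IsPerfectMatching ends M := by
  obtain ⟨N, hN⟩ := SimpleGraph.tutte.2 (not_isTutteViolator_toSimpleGraph hl hc hb)
  have hsurj : Set.SurjOn ends Set.univ N.edgeSet := by
    intro s hs
    induction s with
    | _ v w =>
      obtain ⟨e, he⟩ := N.adj_sub hs
      exact ⟨e, trivial, he⟩
  obtain ⟨M, -, hM⟩ := hsurj.exists_bijOn_subset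
  refine ⟨M, fun v => ?_⟩
  obtain ⟨w, hvw, hunique⟩ := SimpleGraph.Subgraph.isPerfectMatching_iff.1 hN v
  obtain ⟨e, heM, he⟩ := hM.surjOn (SimpleGraph.Subgraph.mem_edgeSet.2 hvw)
  refine ⟨e, ⟨heM, by simp [he]⟩, fun f ⟨hfM, hvf⟩ => ?_⟩
  obtain ⟨x, hf⟩ := Sym2.mem_iff_exists.1 hvf
  have hvx : N.Adj v x := by simpa [hf] using hM.mapsTo hfM
  exact hM.injOn hfM heM (by rw [he, hf, hunique x hvx])

theorem exists_isTwoFactor [Finite V] (hl : NoLoops ends) (hc : IsCubic ends)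
    (hb : Bridgeless ends) : ∃ F : Set E, IsTwoFactor ends F := by
  obtain ⟨M, hM⟩ := exists_isPerfectMatching hl hc hb
  exact ⟨Mᶜ, (isTwoFactor_iff_isPerfectMatching_compl hc).2 (by rwa [compl_compl])⟩

theorem IsTwoFactor.mem_of_notMem (hF : IsTwoFactor ends F) (hc : IsCubic ends) {v : V} {e f : E}
    (he : e ∉ F) (hve : v ∈ ends e) (hvf : v ∈ ends f) (hef : e ≠ f) : f ∈ F := by
  by_contra hf
  exact hef (((isTwoFactor_iff_isPerfectMatching_compl hc).1 hF v).unique ⟨he, hve⟩ ⟨hf, hvf⟩)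

theorem IsTwoFactor.notMem_or_notMem (hF : IsTwoFactor ends F) {v : V} {e f g : E} (he : e ∈ F)
    (hve : v ∈ ends e) (hvf : v ∈ ends f) (hvg : v ∈ ends g) (hnodup : [e, f, g].Nodup) :
    f ∉ F ∨ g ∉ F := by
  by_contra! ⟨hf, hg⟩
  have hlt : 2 < {e | e ∈ F ∧ v ∈ ends e}.ncard :=
    (Set.two_lt_ncard_iff (Set.finite_of_ncard_ne_zero (by simp [hF v]))).2
      ⟨e, f, g, ⟨he, hve⟩, ⟨hf, hvf⟩, ⟨hg, hvg⟩, by grind⟩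
  exact hlt.ne' (hF v)

theorem ncard_eq_four_of_nodup {α : Type*} {x y z w : α} (h : [x, y, z, w].Nodup) :
    ({x, y, z, w} : Set α).ncard = 4 :=
  Set.ncard_eq_four.2 ⟨x, y, z, w, by grind⟩

variable {a b p q : V} {ab ap bp aq bq : E}

/-- Two triangles `a b p` and `a b q` with distinct apices `p` and `q` glued along the edge `ab`.
Each edge is named after its two ends. -/
structure IsDiamond (ends : E → Sym2 V) (a b p q : V) (ab ap bp aq bq : E) : Prop where
  nodup : [a, b, p, q].Nodup
  ends_ab : ends ab = s(a, b)
  ends_ap : ends ap = s(a, p)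
  ends_bp : ends bp = s(b, p)
  ends_aq : ends aq = s(a, q)
  ends_bq : ends bq = s(b, q)

namespace IsDiamond

theorem swap_apices (h : IsDiamond ends a b p q ab ap bp aq bq) :
    IsDiamond ends a b q p ab aq bq ap bp where
  nodup := by have := h.nodup; grind
  ends_ab := h.ends_ab
  ends_ap := h.ends_aq
  ends_bp := h.ends_bq
  ends_aq := h.ends_ap
  ends_bq := h.ends_bp

theorem nodup_edges (h : IsDiamond ends a b p q ab ap bp aq bq) :
    [ab, ap, bp, aq, bq].Nodup := by
  have hends : ([ab, ap, bp, aq, bq].map ends).Nodup := by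
    have := h.nodup
    simp only [List.map_cons, List.map_nil, h.ends_ab, h.ends_ap, h.ends_bp, h.ends_aq, h.ends_bq]
    grind [Sym2.eq_iff]
  exact hends.of_map ends

theorem component_subset_of_notMem (h : IsDiamond ends a b p q ab ap bp aq bq)
    (hl : NoLoops ends) (hc : IsCubic ends) (hF : IsTwoFactor ends F) (hab : ab ∉ F) :
    component ends F a ⊆ {a, b, p, q} := by
  have hvertices := h.nodup
  have hedges := h.nodup_edges
  obtain ⟨-, h_ab, h_ap, h_bp, h_aq, h_bq⟩ := h
  have hap : ap ∈ F := hF.mem_of_notMem hc (v := a) hab (by simp [h_ab]) (by simp [h_ap]) (by grind)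
  have haq : aq ∈ F := hF.mem_of_notMem hc (v := a) hab (by simp [h_ab]) (by simp [h_aq]) (by grind)
  have hbp : bp ∈ F := hF.mem_of_notMem hc (v := b) hab (by simp [h_ab]) (by simp [h_bp]) (by grind)
  have hbq : bq ∈ F := hF.mem_of_notMem hc (v := b) hab (by simp [h_ab]) (by simp [h_bq]) (by grind)
  have hfin : ({a, b, p, q} : Set V).Finite := Set.toFinite _
  have hcycle : {ap, bp, aq, bq} ⊆ F ∩ edgesWithin ends {a, b, p, q} := by
    rintro e (rfl | rfl | rfl | rfl) <;> simp [edgesWithin, *]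
  refine hF.component_subset_of_ncard_le hl hfin (by simp) ?_
  calc ({a, b, p, q} : Set V).ncard = ({ap, bp, aq, bq} : Set E).ncard := by
        rw [ncard_eq_four_of_nodup hvertices, ncard_eq_four_of_nodup (by grind)]
    _ ≤ (F ∩ edgesWithin ends {a, b, p, q}).ncard :=
        Set.ncard_le_ncard hcycle ((hc.finite_edgesWithin hfin).inter_of_right F)

theorem nontrivial_chords_of_mem (h : IsDiamond ends a b p q ab ap bp aq bq)
    (hc : IsCubic ends) (hF : IsTwoFactor ends F) (hab : ab ∈ F) :
    (edgesWithin ends (component ends F a) \ F).Nontrivial := by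
  wlog hap : ap ∉ F generalizing p q ap bp aq bq
  · have haq : aq ∉ F := (hF.notMem_or_notMem (v := a) hab (by simp [h.ends_ab])
      (by simp [h.ends_ap]) (by simp [h.ends_aq]) (by grind [h.nodup_edges])).resolve_left hap
    exact this h.swap_apices haq
  have hedges := h.nodup_edges
  obtain ⟨-, h_ab, h_ap, h_bp, h_aq, h_bq⟩ := h
  have haq : aq ∈ F := hF.mem_of_notMem hc (v := a) hap (by simp [h_ap]) (by simp [h_aq]) (by grind)
  have hbp : bp ∈ F := hF.mem_of_notMem hc (v := p) hap (by simp [h_ap]) (by simp [h_bp]) (by grind)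
  have hbq : bq ∉ F := (hF.notMem_or_notMem (v := b) hab (by simp [h_ab]) (by simp [h_bp])
    (by simp [h_bq]) (by grind)).resolve_left (not_not_intro hbp)
  have ha : a ∈ component ends F a := Relation.ReflTransGen.refl
  have hb : b ∈ component ends F a := mem_component_of_mem hab h_ab ha
  have hp : p ∈ component ends F a := mem_component_of_mem hbp h_bp hb
  have hq : q ∈ component ends F a := mem_component_of_mem haq h_aq ha
  refine ⟨ap, ⟨?_, hap⟩, bq, ⟨?_, hbq⟩, by grind⟩ <;> simp [edgesWithin, *]

theorem ncard_component_ne_five (h : IsDiamond ends a b p q ab ap bp aq bq) (hl : NoLoops ends)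
    (hc : IsCubic ends) (hb : Bridgeless ends) (hF : IsTwoFactor ends F) :
    (component ends F a).ncard ≠ 5 := by
  intro hfive
  by_cases hab : ab ∈ F
  · have hfin : (component ends F a).Finite := Set.finite_of_ncard_pos (by omega)
    have := ((hc.finite_edgesWithin hfin).sdiff (t := F)).to_subtype
    have hchords : 1 < (edgesWithin ends (component ends F a) \ F).ncard :=
      Set.one_lt_ncard_iff_nontrivial.2 (h.nontrivial_chords_of_mem hc hF hab)
    have hle := hF.two_mul_ncard_chords_add_three_le (v := a) hl hc hb (by rw [hfive]; decide)
    omega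
  · have hle := Set.ncard_le_ncard (h.component_subset_of_notMem hl hc hF hab)
    rw [hfive, ncard_eq_four_of_nodup h.nodup] at hle
    omega

end IsDiamond

section Triangle

variable {c : ZMod 3 → V} {f : ZMod 3 → E}

theorem exists_apex_of_triangle (hinj : Function.Injective c)
    (hf : ∀ i, ends (f i) = s(c i, c (i + 1))) {e : E} (he : e ∈ Set.range f)
    (hab : ends e = s(a, b)) :
    ∃ p ap bp, p ≠ a ∧ p ≠ b ∧ ends ap = s(a, p) ∧ ends bp = s(b, p) ∧
      Set.range c = {a, b, p} := by
  obtain ⟨i, rfl⟩ := he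
  have hsucc : ∀ i : ZMod 3, i + 1 + 1 = i + 2 ∧ i + 2 + 1 = i := by decide
  have hapex : ∀ i : ZMod 3, i + 2 ≠ i ∧ i + 2 ≠ i + 1 := by decide
  have hcover : ∀ i j : ZMod 3, j = i ∨ j = i + 1 ∨ j = i + 2 := by decide
  have hrange : Set.range c = {c i, c (i + 1), c (i + 2)} := by
    ext v
    constructor
    · rintro ⟨j, rfl⟩
      rcases hcover i j with rfl | rfl | rfl <;> simp
    · rintro (rfl | rfl | rfl) <;> exact Set.mem_range_self _
  have hnext : ends (f (i + 1)) = s(c (i + 1), c (i + 2)) := by rw [hf, (hsucc i).1]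
  have hprev : ends (f (i + 2)) = s(c i, c (i + 2)) := by
    rw [hf, (hsucc i).2, Sym2.eq_swap]
  rw [hf, Sym2.eq_iff] at hab
  rcases hab with ⟨rfl, rfl⟩ | ⟨rfl, rfl⟩
  · exact ⟨c (i + 2), f (i + 2), f (i + 1), hinj.ne (hapex i).1, hinj.ne (hapex i).2, hprev,
      hnext, hrange⟩
  · exact ⟨c (i + 2), f (i + 1), f (i + 2), hinj.ne (hapex i).2, hinj.ne (hapex i).1, hnext,
      hprev, hrange.trans (Set.insert_comm _ _ _)⟩

theorem range_eq_edgesWithin_of_triangle (hl : NoLoops ends) (hc : IsCubic ends)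
    (hb : Bridgeless ends) (hcinj : Function.Injective c) (hfinj : Function.Injective f)
    (hf : ∀ i, ends (f i) = s(c i, c (i + 1))) :
    Set.range f = edgesWithin ends (Set.range c) := by
  have hcard : (Set.range c).ncard = 3 := by
    rw [← Nat.card_coe_set_eq, Nat.card_range_of_injective hcinj, Nat.card_zmod]
  have hle := two_mul_ncard_edgesWithin_add_three_le hl hc hb (S := Set.range c)
    (by rw [hcard]; decide)
  refine Set.eq_of_subset_of_ncard_le ?_ ?_ (hc.finite_edgesWithin (Set.finite_range c))
  · rintro _ ⟨i, rfl⟩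
    simp [edgesWithin, hf]
  · rw [← Nat.card_coe_set_eq (Set.range f), Nat.card_range_of_injective hfinj, Nat.card_zmod]
    omega

end Triangle

end Mg

theorem stmt4_general {V E : Type} {ends : E → Sym2 V} (hl : Mg.NoLoops ends)
    (hc : Mg.IsCubic ends) (hb : Mg.Bridgeless ends) {F : Set E} (hF : Mg.IsTwoFactor ends F)
    (h5 : ∀ v, (Mg.component ends F v).ncard = 5) :
    ¬ ∃ (c c' : ZMod 3 → V) (f f' : ZMod 3 → E),
      (Function.Injective c ∧ Function.Injective f ∧
        ∀ i, ends (f i) = s(c i, c (i + 1))) ∧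
      (Function.Injective c' ∧ Function.Injective f' ∧
        ∀ i, ends (f' i) = s(c' i, c' (i + 1))) ∧
      Set.range f ≠ Set.range f' ∧ (Set.range f ∩ Set.range f').Nonempty := by
  rintro ⟨c, c', f, f', ⟨hcinj, hfinj, hf⟩, ⟨hcinj', hfinj', hf'⟩, hne, e, he, he'⟩
  obtain ⟨a, b, hab⟩ := Mg.exists_ends_eq ends e
  obtain ⟨p, ap, bp, hpa, hpb, hap, hbp, hrange⟩ := Mg.exists_apex_of_triangle hcinj hf he hab
  obtain ⟨q, aq, bq, hqa, hqb, haq, hbq, hrange'⟩ := Mg.exists_apex_of_triangle hcinj' hf' he' hab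
  have hpq : p ≠ q := by
    rintro rfl
    apply hne
    rw [Mg.range_eq_edgesWithin_of_triangle hl hc hb hcinj hfinj hf,
      Mg.range_eq_edgesWithin_of_triangle hl hc hb hcinj' hfinj' hf', hrange, hrange']
  have hanb : a ≠ b := by simpa [hab] using hl e
  have hdiamond : Mg.IsDiamond ends a b p q e ap bp aq bq :=
    ⟨by grind, hab, hap, hbp, haq, hbq⟩
  exact hdiamond.ncard_component_ne_five hl hc hb hF (h5 a)

theorem stmt4 {V E : Type} [Fintype V] [Fintype E] (ends : E → Sym2 V)
    (hl : Mg.NoLoops ends) (hc : Mg.IsCubic ends) (hb : Mg.Bridgeless ends)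
    (hconn : Mg.Connected ends) (h5 : Mg.TwoFactorsAllC5 ends) :
    ¬ ∃ (c c' : ZMod 3 → V) (f f' : ZMod 3 → E),
      (Function.Injective c ∧ Function.Injective f ∧
        ∀ i, ends (f i) = s(c i, c (i + 1))) ∧
      (Function.Injective c' ∧ Function.Injective f' ∧
        ∀ i, ends (f' i) = s(c' i, c' (i + 1))) ∧
      Set.range f ≠ Set.range f' ∧ (Set.range f ∩ Set.range f').Nonempty := by
  obtain ⟨F, hF⟩ := Mg.exists_isTwoFactor hl hc hb
  exact stmt4_general hl hc hb hF (h5 F hF)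
end

section
/- Let G be a connected bridgeless cubic graph in which every 2-factor consists only of 5-cycles. Then G contains no triangle. -/
/-!
In a bridgeless cubic graph every odd vertex set has at least three boundary edges, so by Tutte's
theorem every edge lies in a perfect matching, and the complement of that matching is a 2-factor
avoiding the edge. Suppose `x y z` is a triangle, and let `x'`, `y'`, `z'` be the other ends of the
third edges at `x`, `y`, `z`. A 2-factor avoiding `x x'` contains the path `y' y x z z'`, which the
edge `y' z'` has to close to a 5-cycle. By symmetry `x' y' z'` is also a triangle. The 2-factor
avoiding `x x'` contains both other edges at `x'`, namely `x' y'` and `x' z'`, besides `y' z'`;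
hence `x' y' z'` is one of its components, which is too small.
-/

namespace Mg

variable {V E : Type} {ends : E → Sym2 V} {F : Set E}

theorem NoLoops.ne (hl : NoLoops ends) {e : E} {a b : V} (h : ends e = s(a, b)) : a ≠ b :=
  fun hab => hl e (by rw [h, hab]; exact Sym2.mk_isDiag_iff.2 rfl)

theorem NoLoops.ncard_ends (hl : NoLoops ends) (e : E) : {v | v ∈ ends e}.ncard = 2 := by
  obtain ⟨p, q, h⟩ : ∃ p q, ends e = s(p, q) := ⟨_, _, (Quot.out_eq (ends e)).symm⟩
  rw [← Set.ncard_pair (hl.ne h)]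
  congr 1
  ext v
  simp [h]

theorem component_subset_of_closed {v : V} {P : Set V} (hv : v ∈ P)
    (hP : ∀ e ∈ F, ∀ a b, ends e = s(a, b) → a ∈ P → b ∈ P) : component ends F v ⊆ P := by
  intro w hw
  induction (show Reach ends F v w from hw) with
  | refl => exact hv
  | tail hreach hstep ih =>
    obtain ⟨e, he, hab⟩ := hstep
    exact hP e he _ _ hab (ih hreach)

namespace IsTwoFactor

theorem eq_or_eq (hF : IsTwoFactor ends F) {v : V} {e₁ e₂ e : E}
    (h₁ : e₁ ∈ F) (hv₁ : v ∈ ends e₁) (h₂ : e₂ ∈ F) (hv₂ : v ∈ ends e₂) (hne : e₁ ≠ e₂)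
    (he : e ∈ F) (hv : v ∈ ends e) : e = e₁ ∨ e = e₂ := by
  have hpair : ({e₁, e₂} : Set E) = {e | e ∈ F ∧ v ∈ ends e} := by
    refine Set.eq_of_subset_of_ncard_le ?_ (by rw [hF v, Set.ncard_pair hne])
      (Set.finite_of_ncard_ne_zero (by rw [hF v]; decide))
    rintro f (rfl | rfl)
    exacts [⟨h₁, hv₁⟩, ⟨h₂, hv₂⟩]
  have hmem : e ∈ ({e₁, e₂} : Set E) := hpair ▸ ⟨he, hv⟩
  exact hmem

theorem exists_mem_ne (hF : IsTwoFactor ends F) (v : V) (e : E) :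
    ∃ g ∈ F, v ∈ ends g ∧ g ≠ e := by
  obtain ⟨g, ⟨hgF, hvg⟩, hne⟩ :=
    Set.exists_ne_of_one_lt_ncard (s := {e | e ∈ F ∧ v ∈ ends e}) (by rw [hF v]; decide) e
  exact ⟨g, hgF, hvg, hne⟩

theorem mem_of_notMem_s6 (hF : IsTwoFactor ends F) (hc : IsCubic ends) {v : V} {e₀ e : E}
    (h₀ : e₀ ∉ F) (hv₀ : v ∈ ends e₀) (hv : v ∈ ends e) (hne : e ≠ e₀) : e ∈ F := by
  have hsdiff : {e | e ∈ F ∧ v ∈ ends e} = {e | v ∈ ends e} \ {e₀} := by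
    refine Set.eq_of_subset_of_ncard_le ?_ ?_ ?_
    · rintro f ⟨hfF, hvf⟩
      exact ⟨hvf, fun h => h₀ (h ▸ hfF)⟩
    · rw [Set.ncard_sdiff_singleton_of_mem (show e₀ ∈ {e | v ∈ ends e} from hv₀), hc v, hF v]
    · exact (Set.finite_of_ncard_ne_zero (by rw [hc v]; decide)).sdiff
  have hmem : e ∈ {e | e ∈ F ∧ v ∈ ends e} := hsdiff ▸ ⟨hv, hne⟩
  exact hmem.1

end IsTwoFactor

/-- The walk `c 0, c 1, …, c k` with edges `f 0, …, f (k - 1)` in `F`, in which consecutive edges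
differ. Values of `c` beyond `k` and of `f` from `k` on are irrelevant. In a 2-factor such a walk
runs around a single cycle. -/
structure IsNonbacktrackingWalk (ends : E → Sym2 V) (F : Set E) (c : ℕ → V) (f : ℕ → E) (k : ℕ) :
    Prop where
  mem : ∀ i < k, f i ∈ F
  ends_eq : ∀ i < k, ends (f i) = s(c i, c (i + 1))
  ne : ∀ i, i + 1 < k → f i ≠ f (i + 1)

namespace IsNonbacktrackingWalk

variable {c : ℕ → V} {f : ℕ → E} {k : ℕ}

theorem mono (h : IsNonbacktrackingWalk ends F c f k) {m : ℕ} (hm : m ≤ k) :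
    IsNonbacktrackingWalk ends F c f m where
  mem i hi := h.mem i (hi.trans_le hm)
  ends_eq i hi := h.ends_eq i (hi.trans_le hm)
  ne i hi := h.ne i (hi.trans_le hm)

theorem reach (h : IsNonbacktrackingWalk ends F c f k) {i : ℕ} (hi : i ≤ k) :
    Reach ends F (c 0) (c i) := by
  induction i with
  | zero => exact .refl
  | succ i ih => exact .tail (ih (by omega)) ⟨f i, h.mem i hi, h.ends_eq i hi⟩

theorem eq_or_eq_succ_of_mem_ends (h : IsNonbacktrackingWalk ends F c f k)
    (hinj : Set.InjOn c (Set.Iic k)) {i j : ℕ} (hi : i ≤ k) (hj : j < k)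
    (hmem : c i ∈ ends (f j)) : i = j ∨ i = j + 1 := by
  rw [h.ends_eq j hj, Sym2.mem_iff] at hmem
  exact hmem.imp (hinj hi hj.le) (hinj hi hj)

theorem eq_zero_of_edge (h : IsNonbacktrackingWalk ends F c f k) (hl : NoLoops ends)
    (hF : IsTwoFactor ends F) (hinj : Set.InjOn c (Set.Iic k)) {g : E} {i : ℕ} (hg : g ∈ F)
    (hi : i ≤ k) (hends : ends g = s(c k, c i)) (hne : ∀ j, j + 1 = k → g ≠ f j) : i = 0 := by
  by_contra hi0
  obtain ⟨j, rfl⟩ := Nat.exists_eq_succ_of_ne_zero hi0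
  have hjk : j + 1 < k := hi.lt_of_ne fun hjk => hl.ne hends (by rw [← hjk])
  have hgk : c k ∈ ends g := by simp [hends]
  rcases hF.eq_or_eq (v := c (j + 1)) (h.mem j (by omega)) (by simp [h.ends_eq j (by omega)])
    (h.mem (j + 1) hjk) (by simp [h.ends_eq (j + 1) hjk]) (h.ne j hjk) hg (by simp [hends])
    with rfl | rfl
  · have := h.eq_or_eq_succ_of_mem_ends hinj le_rfl (by omega) hgk
    omega
  · have := h.eq_or_eq_succ_of_mem_ends hinj le_rfl hjk hgk
    exact hne (j + 1) (by omega) rfl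

theorem eq_or_exists_eq_of_mem (h : IsNonbacktrackingWalk ends F c f k) (hl : NoLoops ends)
    (hF : IsTwoFactor ends F) (hinj : Set.InjOn c (Set.Iic k)) {g : E} (hg : g ∈ F)
    (hends : ends g = s(c k, c 0)) (hne : ∀ j, j + 1 = k → g ≠ f j) {e : E} {i : ℕ} (he : e ∈ F)
    (hi : i ≤ k) (hmem : c i ∈ ends e) : e = g ∨ ∃ j < k, e = f j := by
  have hk : k ≠ 0 := fun hk => hl.ne hends (by rw [hk])
  rcases Nat.eq_zero_or_eq_succ_pred i with hi0 | hi0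
  · subst hi0
    have hgf : g ≠ f 0 := fun hgf => by
      have := h.eq_or_eq_succ_of_mem_ends hinj le_rfl (j := 0) (by omega)
        (hgf ▸ by simp [hends])
      exact hne 0 (by omega) hgf
    exact (hF.eq_or_eq hg (by simp [hends]) (h.mem 0 (by omega))
      (by simp [h.ends_eq 0 (by omega)]) hgf he hmem).imp_right fun heq => ⟨0, by omega, heq⟩
  · obtain ⟨j, rfl⟩ : ∃ j, i = j + 1 := ⟨_, hi0⟩
    have hfj : c (j + 1) ∈ ends (f j) := by simp [h.ends_eq j (by omega)]
    rcases hi.eq_or_lt with rfl | hlt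
    · exact (hF.eq_or_eq hg (by simp [hends]) (h.mem j (by omega)) hfj (hne j rfl) he
        hmem).imp_right fun heq => ⟨j, by omega, heq⟩
    · rcases hF.eq_or_eq (h.mem j (by omega)) hfj (h.mem (j + 1) hlt)
        (by simp [h.ends_eq (j + 1) hlt]) (h.ne j hlt) he hmem with heq | heq
      exacts [.inr ⟨j, by omega, heq⟩, .inr ⟨j + 1, hlt, heq⟩]

theorem component_subset_of_edge (h : IsNonbacktrackingWalk ends F c f k) (hl : NoLoops ends)
    (hF : IsTwoFactor ends F) (hinj : Set.InjOn c (Set.Iic k)) {g : E} (hg : g ∈ F)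
    (hends : ends g = s(c k, c 0)) (hne : ∀ j, j + 1 = k → g ≠ f j) :
    component ends F (c 0) ⊆ c '' Set.Iic k := by
  refine component_subset_of_closed ⟨0, Nat.zero_le k, rfl⟩ ?_
  rintro e he _ b hab ⟨i, hi, rfl⟩
  have hb : b ∈ ends e := by simp [hab]
  rcases h.eq_or_exists_eq_of_mem hl hF hinj hg hends hne he hi (by simp [hab]) with
    rfl | ⟨j, hj, rfl⟩
  · rw [hends, Sym2.mem_iff] at hb
    rcases hb with rfl | rfl
    exacts [⟨k, Set.self_mem_Iic, rfl⟩, ⟨0, Nat.zero_le k, rfl⟩]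
  · rw [h.ends_eq j hj, Sym2.mem_iff] at hb
    rcases hb with rfl | rfl
    exacts [⟨j, hj.le, rfl⟩, ⟨j + 1, hj, rfl⟩]

theorem injOn_of_lt_ncard (h : IsNonbacktrackingWalk ends F c f k) (hl : NoLoops ends)
    (hF : IsTwoFactor ends F) (hk : k < (component ends F (c 0)).ncard) :
    Set.InjOn c (Set.Iic k) := by
  induction k with
  | zero =>
    intro i hi j hj _
    rw [Nat.le_zero.1 hi, Nat.le_zero.1 hj]
  | succ k ih =>
    have hwalk := h.mono k.le_succ
    have hinj := ih hwalk (by omega)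
    rw [show Set.Iic (k + 1) = insert (k + 1) (Set.Iic k) from Order.Iic_succ k,
      Set.injOn_insert (by simp)]
    refine ⟨hinj, ?_⟩
    rintro ⟨i, hi, hci⟩
    have hmem : f k ∈ F := h.mem k k.lt_succ_self
    have hends : ends (f k) = s(c k, c i) := hci ▸ h.ends_eq k k.lt_succ_self
    have hne : ∀ j, j + 1 = k → f k ≠ f j := by
      rintro j rfl
      exact (h.ne j (j + 1).lt_succ_self).symm
    obtain rfl := hwalk.eq_zero_of_edge hl hF hinj hmem hi hends hne
    have hle : (component ends F (c 0)).ncard ≤ k + 1 :=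
      calc (component ends F (c 0)).ncard
          ≤ (c '' Set.Iic k).ncard := Set.ncard_le_ncard
            (hwalk.component_subset_of_edge hl hF hinj hmem hends hne)
            ((Set.finite_Iic k).image c)
        _ ≤ k + 1 := by simpa using Set.ncard_image_le (f := c) (Set.finite_Iic k)
    omega

theorem exists_closing_edge (h : IsNonbacktrackingWalk ends F c f k) (hl : NoLoops ends)
    (hF : IsTwoFactor ends F) (hk : (component ends F (c 0)).ncard = k + 1) :
    ∃ g ∈ F, ends g = s(c k, c 0) := by
  have hinj := h.injOn_of_lt_ncard hl hF (by omega)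
  have himage : c '' Set.Iic k = component ends F (c 0) := by
    refine Set.eq_of_subset_of_ncard_le ?_ ?_ (Set.finite_of_ncard_ne_zero (by omega))
    · rintro _ ⟨i, hi, rfl⟩
      exact h.reach hi
    · rw [hk, hinj.ncard_image, Set.ncard_Iic_nat]
  obtain ⟨g, hg, ⟨p, hends⟩, hne⟩ := hF.exists_mem_ne (c k) (f (k - 1))
  have hp : p ∈ component ends F (c 0) := .tail (h.reach le_rfl) ⟨g, hg, hends⟩
  obtain ⟨i, hi, rfl⟩ := himage ▸ hp
  obtain rfl := h.eq_zero_of_edge hl hF hinj hg hi hends (by rintro j rfl; exact hne)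
  exact ⟨g, hg, hends⟩

end IsNonbacktrackingWalk

theorem IsTwoFactor.ncard_component_le_of_cycle (hF : IsTwoFactor ends F) (hl : NoLoops ends)
    {n : ℕ} [NeZero n] {c : ZMod n → V} {f : ZMod n → E} (hmem : ∀ i, f i ∈ F)
    (hends : ∀ i, ends (f i) = s(c i, c (i + 1))) (hne : ∀ i, f i ≠ f (i + 1)) :
    (component ends F (c 0)).ncard ≤ n := by
  by_contra! hlt
  have hwalk : IsNonbacktrackingWalk ends F (fun i => c i) (fun i => f i) n :=
    { mem := fun i _ => hmem i
      ends_eq := fun i _ => by simpa using hends i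
      ne := fun i _ => by simpa using hne i }
  have hinj := hwalk.injOn_of_lt_ncard hl hF (by simpa using hlt)
  exact NeZero.ne' n (hinj (Nat.zero_le n) Set.self_mem_Iic (by simp))

/-- A triangle with vertices `corner i` and sides `side i` joining `corner i` to `corner (i + 1)`,
together with a third edge `spoke i` at each corner, whose other end is `tip i`. -/
structure SpokedTriangle (ends : E → Sym2 V) where
  (corner tip : ZMod 3 → V)
  (side spoke : ZMod 3 → E)
  side_injective : Function.Injective side
  ends_side : ∀ i, ends (side i) = s(corner i, corner (i + 1))
  ends_spoke : ∀ i, ends (spoke i) = s(corner i, tip i)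
  spoke_ne_side : ∀ i, spoke i ≠ side i
  spoke_succ_ne_side : ∀ i, spoke (i + 1) ≠ side i

theorem HasCycle.nonempty_spokedTriangle (hc : IsCubic ends) (h : HasCycle ends 3) :
    Nonempty (SpokedTriangle ends) := by
  obtain ⟨c, f, -, hf, hends⟩ := h
  have hspoke : ∀ i, ∃ e t, ends e = s(c i, t) ∧ e ≠ f i ∧ e ≠ f (i - 1) := fun i => by
    obtain ⟨e, ⟨t, ht⟩, hne⟩ :=
      Set.exists_mem_notMem_of_ncard_lt_ncard (s := {f i, f (i - 1)}) (t := {e | c i ∈ ends e})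
        ((Set.ncard_insert_le _ _).trans_lt (by rw [hc, Set.ncard_singleton]; decide))
    exact ⟨e, t, ht, by simpa using hne⟩
  choose spoke tip hends_spoke hne hne_pred using hspoke
  exact ⟨⟨c, tip, f, spoke, hf, hends, hends_spoke, hne, fun i => by simpa using hne_pred (i + 1)⟩⟩

theorem zmod_three_add_two_add_one (i : ZMod 3) : i + 2 + 1 = i := by decide +revert

theorem zmod_three_eq_or_eq_or_eq (i j : ZMod 3) : j = i ∨ j = i + 1 ∨ j = i + 2 := by
  decide +revert

namespace SpokedTriangle

variable (T : SpokedTriangle ends)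

theorem ends_side_add_two (i : ZMod 3) :
    ends (T.side (i + 2)) = s(T.corner (i + 2), T.corner i) := by
  rw [T.ends_side, zmod_three_add_two_add_one]

/-- The walk `tip (i + 1)`, `corner (i + 1)`, `corner i`, `corner (i + 2)`, `tip (i + 2)`. -/
def tipPath (i : ZMod 3) : ℕ → V
  | 0 => T.tip (i + 1)
  | 1 => T.corner (i + 1)
  | 2 => T.corner i
  | 3 => T.corner (i + 2)
  | _ => T.tip (i + 2)

/-- The edges traversed by `tipPath`. -/
def tipPathEdge (i : ZMod 3) : ℕ → E
  | 0 => T.spoke (i + 1)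
  | 1 => T.side i
  | 2 => T.side (i + 2)
  | _ => T.spoke (i + 2)

variable {T} {i : ZMod 3}

theorem side_mem_of_spoke_notMem (hc : IsCubic ends) (hF : IsTwoFactor ends F)
    (hi : T.spoke i ∉ F) : T.side i ∈ F ∧ T.side (i + 2) ∈ F := by
  have hspoke : T.corner i ∈ ends (T.spoke i) := by simp [T.ends_spoke]
  constructor
  · exact hF.mem_of_notMem_s6 hc hi hspoke (by simp [T.ends_side]) (T.spoke_ne_side i).symm
  · refine hF.mem_of_notMem_s6 hc hi hspoke (by simp [T.ends_side_add_two]) fun heq => ?_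
    exact T.spoke_succ_ne_side (i + 2) (by rw [zmod_three_add_two_add_one, heq])

theorem opposite_side_notMem (hl : NoLoops ends) (hc : IsCubic ends) (hF : IsTwoFactor ends F)
    (h3 : ∀ v, 3 < (component ends F v).ncard) (hi : T.spoke i ∉ F) : T.side (i + 1) ∉ F := by
  intro hopp
  obtain ⟨hside, hside'⟩ := side_mem_of_spoke_notMem hc hF hi
  have hmem : ∀ j, T.side j ∈ F := fun j => by
    rcases zmod_three_eq_or_eq_or_eq i j with rfl | rfl | rfl <;> assumption
  exact (h3 _).not_ge <| hF.ncard_component_le_of_cycle hl hmem T.ends_side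
    fun j heq => by simpa using T.side_injective heq

theorem isNonbacktrackingWalk_tipPath (hl : NoLoops ends) (hc : IsCubic ends)
    (hF : IsTwoFactor ends F) (h3 : ∀ v, 3 < (component ends F v).ncard) (hi : T.spoke i ∉ F) :
    IsNonbacktrackingWalk ends F (T.tipPath i) (T.tipPathEdge i) 4 := by
  obtain ⟨hside, hside'⟩ := side_mem_of_spoke_notMem hc hF hi
  have hopp := opposite_side_notMem hl hc hF h3 hi
  have htwo : i + 1 + 1 = i + 2 := by ring
  have hspoke₁ : T.spoke (i + 1) ∈ F :=
    hF.mem_of_notMem_s6 hc hopp (v := T.corner (i + 1)) (by simp [T.ends_side])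
      (by simp [T.ends_spoke]) (T.spoke_ne_side _)
  have hspoke₂ : T.spoke (i + 2) ∈ F :=
    hF.mem_of_notMem_s6 hc hopp (v := T.corner (i + 2)) (by simp [T.ends_side, htwo])
      (by simp [T.ends_spoke]) (htwo ▸ T.spoke_succ_ne_side _)
  have hsides : T.side i ≠ T.side (i + 2) :=
    T.side_injective.ne (by simpa using show (2 : ZMod 3) ≠ 0 by decide)
  constructor
  · intro j hj
    interval_cases j
    exacts [hspoke₁, hside, hside', hspoke₂]
  · intro j hj
    interval_cases j
    exacts [(T.ends_spoke _).trans Sym2.eq_swap, (T.ends_side i).trans Sym2.eq_swap,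
      (T.ends_side_add_two i).trans Sym2.eq_swap, T.ends_spoke _]
  · intro j hj
    have hj : j < 3 := by omega
    interval_cases j
    exacts [T.spoke_succ_ne_side i, hsides, (T.spoke_ne_side _).symm]

theorem exists_tip_edge (hl : NoLoops ends) (hc : IsCubic ends) (hF : IsTwoFactor ends F)
    (h5 : ∀ v, (component ends F v).ncard = 5) (hi : T.spoke i ∉ F) :
    T.tip (i + 1) ≠ T.tip (i + 2) ∧ (∀ j, T.tip (i + 1) ≠ T.corner j) ∧
      ∃ g ∈ F, ends g = s(T.tip (i + 1), T.tip (i + 2)) := by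
  have hwalk := T.isNonbacktrackingWalk_tipPath hl hc hF (fun v => by rw [h5]; decide) hi
  have hinj := hwalk.injOn_of_lt_ncard hl hF (by rw [h5]; decide)
  have hdistinct : ∀ m ≤ 4, m ≠ 0 → T.tip (i + 1) ≠ T.tipPath i m :=
    fun m hm hm0 heq => hm0 (hinj (Nat.zero_le 4) hm heq).symm
  obtain ⟨g, hg, hends⟩ := hwalk.exists_closing_edge hl hF (h5 _)
  refine ⟨hdistinct 4 le_rfl (by decide), fun j => ?_, g, hg, hends.trans Sym2.eq_swap⟩
  rcases zmod_three_eq_or_eq_or_eq i j with rfl | rfl | rfl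
  exacts [hdistinct 2 (by decide) (by decide), hdistinct 1 (by decide) (by decide),
    hdistinct 3 (by decide) (by decide)]

end SpokedTriangle

/-- The edges with exactly one end in `K`. -/
def boundary (ends : E → Sym2 V) (K : Set V) : Set E :=
  {e | ∃ p q, ends e = s(p, q) ∧ p ∈ K ∧ q ∉ K}

/-- The edges with both ends in `K`. -/
def edgesInside (ends : E → Sym2 V) (K : Set V) : Set E := {e | ∀ v ∈ ends e, v ∈ K}

theorem mem_boundary_iff {e : E} {p q : V} (h : ends e = s(p, q)) (K : Set V) :
    e ∈ boundary ends K ↔ (p ∈ K ∧ q ∉ K) ∨ (q ∈ K ∧ p ∉ K) := by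
  simp only [boundary, Set.mem_ofPred_eq, h, Sym2.eq_iff]
  constructor
  · rintro ⟨a, b, ⟨rfl, rfl⟩ | ⟨rfl, rfl⟩, hab⟩
    exacts [.inl hab, .inr hab]
  · rintro (hpq | hqp)
    exacts [⟨p, q, .inl ⟨rfl, rfl⟩, hpq⟩, ⟨q, p, .inr ⟨rfl, rfl⟩, hqp⟩]

open Classical in
theorem NoLoops.card_filter_mem_ends (hl : NoLoops ends) (K : Finset V) (e : E) :
    (K.filter (· ∈ ends e)).card =
      (if e ∈ boundary ends K then 1 else 0) + 2 * (if e ∈ edgesInside ends K then 1 else 0) := by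
  obtain ⟨p, q, h⟩ : ∃ p q, ends e = s(p, q) := ⟨_, _, (Quot.out_eq (ends e)).symm⟩
  have hfilter : K.filter (· ∈ ends e) = ({p, q} : Finset V).filter (· ∈ K) := by
    ext v
    simp [h, and_comm]
  rw [hfilter, Finset.card_filter, Finset.sum_pair (hl.ne h)]
  by_cases hp : p ∈ K <;> by_cases hq : q ∈ K <;>
    simp [mem_boundary_iff h, edgesInside, h, hp, hq]

theorem NoLoops.sum_ncard_incident_eq [Finite E] (hl : NoLoops ends) (K : Finset V) :
    ∑ v ∈ K, {e | v ∈ ends e}.ncard =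
      (boundary ends K).ncard + 2 * (edgesInside ends K).ncard := by
  classical
  cases nonempty_fintype E
  have hncard : ∀ s : Set E, s.ncard = ∑ e, if e ∈ s then 1 else 0 := fun s => by
    rw [Set.ncard_eq_toFinset_card', ← Finset.card_filter]
    congr 1
    ext
    simp
  simp_rw [hncard, Finset.mul_sum, ← Finset.sum_add_distrib, ← hl.card_filter_mem_ends]
  rw [Finset.sum_comm]
  simp only [Set.mem_ofPred_eq, Finset.card_filter]
  congr!

theorem Bridgeless.ncard_boundary_ne_one (hb : Bridgeless ends) (K : Set V) :
    (boundary ends K).ncard ≠ 1 := by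
  intro hone
  obtain ⟨e, he⟩ := Set.ncard_eq_one.1 hone
  obtain ⟨p, q, hpq, hp, hq⟩ : e ∈ boundary ends K := by simp [he]
  have hclosed : component ends {f | f ≠ e} p ⊆ K :=
    component_subset_of_closed hp fun f hf a b hab ha => by
      by_contra hbK
      have hmem : f ∈ boundary ends K := ⟨a, b, hab, ha, hbK⟩
      rw [he] at hmem
      exact hf hmem
  exact hq (hclosed (hb e p q hpq))

/-- `K` behaves like an odd component of the graph with the vertices in `T` deleted: it has odd
size, is disjoint from `T`, and every edge leaving it ends in `T`. -/
structure IsOddPart (ends : E → Sym2 V) (T K : Set V) : Prop where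
  odd : Odd K.ncard
  disjoint : Disjoint K T
  mem_or_mem : ∀ e p q, ends e = s(p, q) → p ∈ K → q ∈ K ∨ q ∈ T

theorem IsOddPart.boundary_subset {T K : Set V} (h : IsOddPart ends T K) :
    boundary ends K ⊆ boundary ends T := by
  rintro e ⟨p, q, hpq, hp, hq⟩
  exact ⟨q, p, hpq.trans Sym2.eq_swap, (h.mem_or_mem e p q hpq hp).resolve_left hq,
    h.disjoint.notMem_of_mem_left hp⟩

theorem IsOddPart.disjoint_boundary {T K K' : Set V} (h : IsOddPart ends T K)
    (h' : IsOddPart ends T K') (hKK' : Disjoint K K') :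
    Disjoint (boundary ends K) (boundary ends K') := by
  rw [Set.disjoint_left]
  rintro e ⟨p, q, hpq, hp, hq⟩ he'
  have hqT := (h.mem_or_mem e p q hpq hp).resolve_left hq
  rcases (mem_boundary_iff hpq K').1 he' with ⟨hp', -⟩ | ⟨hq', -⟩
  exacts [hKK'.notMem_of_mem_left hp hp', h'.disjoint.notMem_of_mem_left hq' hqT]

section Cubic

variable [Finite V] [Finite E]

theorem IsCubic.three_mul_ncard_eq_s6 (hc : IsCubic ends) (hl : NoLoops ends) (K : Set V) :
    3 * K.ncard = (boundary ends K).ncard + 2 * (edgesInside ends K).ncard := by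
  have hsum := hl.sum_ncard_incident_eq K.toFinite.toFinset
  simp only [hc _, Finset.sum_const, Set.Finite.coe_toFinset, smul_eq_mul] at hsum
  rw [← hsum, Set.ncard_eq_toFinset_card K, mul_comm]

theorem IsCubic.even_card (hc : IsCubic ends) (hl : NoLoops ends) : Even (Nat.card V) := by
  have hboundary : boundary ends Set.univ = ∅ := by
    simp [boundary]
  have hsum := hc.three_mul_ncard_eq_s6 hl Set.univ
  rw [hboundary, Set.ncard_empty, Set.ncard_univ] at hsum
  rw [Nat.even_iff]
  omega

theorem Bridgeless.three_le_ncard_boundary (hb : Bridgeless ends) (hl : NoLoops ends)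
    (hc : IsCubic ends) {K : Set V} (hK : Odd K.ncard) : 3 ≤ (boundary ends K).ncard := by
  have hsum := hc.three_mul_ncard_eq_s6 hl K
  have hone := hb.ncard_boundary_ne_one K
  rw [Nat.odd_iff] at hK
  omega

variable {ι : Type*} [Finite ι] {T : Set V} {K : ι → Set V}

theorem three_mul_card_le_ncard_boundary (hl : NoLoops ends) (hc : IsCubic ends)
    (hb : Bridgeless ends) (hK : ∀ i, IsOddPart ends T (K i))
    (hdisj : Pairwise (Function.onFun Disjoint K)) :
    3 * Nat.card ι ≤ (boundary ends T).ncard := by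
  cases nonempty_fintype ι
  calc 3 * Nat.card ι = ∑ _i : ι, 3 := by simp [mul_comm]
    _ ≤ ∑ i, (boundary ends (K i)).ncard :=
      Finset.sum_le_sum fun i _ => hb.three_le_ncard_boundary hl hc (hK i).odd
    _ = (⋃ i, boundary ends (K i)).ncard := by
      rw [Set.ncard_iUnion_of_finite (fun _ => Set.toFinite _)
        fun i j hij => (hK i).disjoint_boundary (hK j) (hdisj hij), finsum_eq_sum_of_fintype]
    _ ≤ (boundary ends T).ncard :=
      Set.ncard_le_ncard (Set.iUnion_subset fun i => (hK i).boundary_subset) (Set.toFinite _)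

theorem card_lt_ncard_of_edge (hl : NoLoops ends) (hc : IsCubic ends)
    (hb : Bridgeless ends) (hK : ∀ i, IsOddPart ends T (K i))
    (hdisj : Pairwise (Function.onFun Disjoint K)) {e : E} (he : e ∈ edgesInside ends T) :
    Nat.card ι < T.ncard := by
  have hle := three_mul_card_le_ncard_boundary hl hc hb hK hdisj
  have hsum := hc.three_mul_ncard_eq_s6 hl T
  have hpos : 0 < (edgesInside ends T).ncard := (Set.ncard_pos (Set.toFinite _)).2 ⟨e, he⟩
  omega

end Cubic

/-- The simple graph underlying the multigraph `ends`. -/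
def underlying (ends : E → Sym2 V) : SimpleGraph V := SimpleGraph.fromEdgeSet (Set.range ends)

/-- The vertices of a component of the underlying graph with `A` and then `S` deleted,
seen as vertices of the multigraph. -/
def componentVerts {A : Set V} {S : Set ↥Aᶜ}
    (C : ((⊤ : ((underlying ends).induce Aᶜ).Subgraph).deleteVerts S).coe.ConnectedComponent) :
    Set V :=
  (Subtype.val ∘ Subtype.val) '' C.supp

section Tutte

variable {A : Set V} {S : Set ↥Aᶜ}
  {C D : ((⊤ : ((underlying ends).induce Aᶜ).Subgraph).deleteVerts S).coe.ConnectedComponent}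

theorem ncard_componentVerts : (componentVerts C).ncard = C.supp.ncard :=
  Set.ncard_image_of_injective _ (Subtype.val_injective.comp Subtype.val_injective)

theorem disjoint_componentVerts (hne : C ≠ D) :
    Disjoint (componentVerts C) (componentVerts D) :=
  (Set.disjoint_image_iff (Subtype.val_injective.comp Subtype.val_injective)).2
    (SimpleGraph.pairwise_disjoint_supp_connectedComponent _ hne)

theorem isOddPart_componentVerts (hl : NoLoops ends) (hC : Odd C.supp.ncard) :
    IsOddPart ends (A ∪ Subtype.val '' S) (componentVerts C) where
  odd := ncard_componentVerts ▸ hC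
  disjoint := by
    rw [Set.disjoint_left]
    rintro _ ⟨w, -, rfl⟩ (hA | ⟨t, htS, ht⟩)
    · exact w.1.2 hA
    · exact w.2.2 (Subtype.ext ht ▸ htS)
  mem_or_mem := by
    rintro e _ q he ⟨w, hw, rfl⟩
    by_contra! hq
    obtain ⟨hqC, hqT⟩ := hq
    rw [Set.mem_union, not_or] at hqT
    have hqS : (⟨q, hqT.1⟩ : ↥Aᶜ) ∉ S := fun h => hqT.2 ⟨_, h, rfl⟩
    have hadj : ((⊤ : ((underlying ends).induce Aᶜ).Subgraph).deleteVerts S).coe.Adj w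
        ⟨⟨q, hqT.1⟩, trivial, hqS⟩ :=
      SimpleGraph.Subgraph.deleteVerts_adj.2 ⟨trivial, w.2.2, trivial, hqS, ⟨e, he⟩, hl.ne he⟩
    exact hqC ⟨_, C.mem_supp_of_adj_mem_supp hw hadj, rfl⟩

variable [Finite V] [Finite E] {e : E}

theorem card_verts_deleteVerts_add_ncard (G : SimpleGraph V) (A : Set V) (S : Set ↥Aᶜ) :
    Nat.card ((⊤ : (G.induce Aᶜ).Subgraph).deleteVerts S).verts + S.ncard + A.ncard =
      Nat.card V := by
  have hverts : ((⊤ : (G.induce Aᶜ).Subgraph).deleteVerts S).verts = Sᶜ := by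
    simp [Set.compl_eq_univ_sdiff]
  rw [hverts, Nat.card_coe_set_eq, add_comm Sᶜ.ncard, Set.ncard_add_ncard_compl,
    Nat.card_coe_set_eq, add_comm, Set.ncard_add_ncard_compl]

theorem not_isTutteViolator (hl : NoLoops ends) (hc : IsCubic ends) (hb : Bridgeless ends)
    (S : Set ↥{v | v ∈ ends e}ᶜ) :
    ¬ ((underlying ends).induce {v | v ∈ ends e}ᶜ).IsTutteViolator S := by
  intro hS
  rw [SimpleGraph.IsTutteViolator] at hS
  have hverts := card_verts_deleteVerts_add_ncard (underlying ends) {v | v ∈ ends e} S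
  set H := (⊤ : ((underlying ends).induce {v | v ∈ ends e}ᶜ).Subgraph).deleteVerts S
  have hlt : H.coe.oddComponents.ncard < ({v | v ∈ ends e} ∪ Subtype.val '' S).ncard := by
    rw [← Nat.card_coe_set_eq]
    exact card_lt_ncard_of_edge (K := fun C : H.coe.oddComponents => componentVerts C.1) hl hc hb
      (fun C => isOddPart_componentVerts hl C.2)
      (fun C D hne => disjoint_componentVerts (Subtype.coe_injective.ne hne))
      (e := e) (fun v hv => .inl hv)
  have hends := hl.ncard_ends e
  have hunion : ({v | v ∈ ends e} ∪ Subtype.val '' S).ncard ≤ 2 + S.ncard := by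
    grw [Set.ncard_union_le, hends, Set.ncard_image_of_injective _ Subtype.val_injective]
  have hparity := H.coe.odd_ncard_oddComponents
  have heven := hc.even_card hl
  rw [Nat.odd_iff, Nat.odd_iff] at hparity
  rw [Nat.even_iff] at heven
  omega

end Tutte

theorem isPerfectMatching_insert {e : E} {P : Set (Sym2 V)} {R : Set E}
    (hR : Set.BijOn ends R P) (havoid : ∀ s ∈ P, ∀ v ∈ s, v ∉ ends e)
    (hcover : ∀ v ∉ ends e, ∃! s, s ∈ P ∧ v ∈ s) : IsPerfectMatching ends (insert e R) := by
  intro v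
  by_cases hv : v ∈ ends e
  · refine ⟨e, ⟨Set.mem_insert _ _, hv⟩, ?_⟩
    rintro f ⟨rfl | hf, hvf⟩
    exacts [rfl, absurd hv (havoid _ (hR.mapsTo hf) v hvf)]
  · obtain ⟨s, ⟨hs, hvs⟩, huniq⟩ := hcover v hv
    obtain ⟨f, hf, rfl⟩ := hR.surjOn hs
    refine ⟨f, ⟨.inr hf, hvs⟩, ?_⟩
    rintro f' ⟨rfl | hf', hvf'⟩
    exacts [absurd hvf' hv, hR.injOn hf' hf (huniq _ ⟨hR.mapsTo hf', hvf'⟩)]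

theorem exists_isPerfectMatching_mem_of_induce {e : E}
    {N : ((underlying ends).induce {v | v ∈ ends e}ᶜ).Subgraph} (hN : N.IsPerfectMatching) :
    ∃ M, IsPerfectMatching ends M ∧ e ∈ M := by
  have hP : Set.SurjOn ends Set.univ (Sym2.map Subtype.val '' N.edgeSet) := by
    rintro _ ⟨s, hs, rfl⟩
    induction s with | _ a b
    obtain ⟨⟨f, hf⟩, -⟩ := N.adj_sub hs
    exact ⟨f, trivial, hf⟩
  obtain ⟨R, -, hR⟩ := hP.exists_bijOn_subset
  refine ⟨insert e R, isPerfectMatching_insert hR ?_ ?_, Set.mem_insert e R⟩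
  · rintro _ ⟨s, -, rfl⟩ v hv
    obtain ⟨w, -, rfl⟩ := Sym2.mem_map.1 hv
    exact w.2
  · intro v hv
    obtain ⟨w, hw, huniq⟩ := SimpleGraph.Subgraph.isPerfectMatching_iff.1 hN ⟨v, hv⟩
    refine ⟨s(v, w.1), ⟨⟨s(⟨v, hv⟩, w), hw, rfl⟩, Sym2.mem_mk_left _ _⟩, ?_⟩
    rintro _ ⟨⟨s, hs, rfl⟩, hvs⟩
    obtain ⟨_, ⟨t, rfl⟩, rfl⟩ := Sym2.mem_map.1 hvs
    rw [← huniq t hs]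
    rfl

theorem exists_isPerfectMatching_mem [Finite V] [Finite E] (hl : NoLoops ends)
    (hc : IsCubic ends) (hb : Bridgeless ends) (e : E) :
    ∃ M, IsPerfectMatching ends M ∧ e ∈ M := by
  obtain ⟨N, hN⟩ := SimpleGraph.tutte.2 (not_isTutteViolator (e := e) hl hc hb)
  exact exists_isPerfectMatching_mem_of_induce hN

theorem IsPerfectMatching.isTwoFactor_compl (hc : IsCubic ends) {M : Set E}
    (hM : IsPerfectMatching ends M) : IsTwoFactor ends Mᶜ := by
  intro v
  obtain ⟨e, ⟨heM, hve⟩, huniq⟩ := hM v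
  have hsdiff : {f | f ∈ Mᶜ ∧ v ∈ ends f} = {f | v ∈ ends f} \ {e} := by
    ext f
    constructor
    · rintro ⟨hfM, hvf⟩
      exact ⟨hvf, fun h => hfM (h ▸ heM)⟩
    · rintro ⟨hvf, hne⟩
      exact ⟨fun hfM => hne (huniq f ⟨hfM, hvf⟩), hvf⟩
  rw [hsdiff, Set.ncard_sdiff_singleton_of_mem (show e ∈ {f | v ∈ ends f} from hve), hc v]

theorem not_hasCycle_three_of_forall_exists_isTwoFactor (hl : NoLoops ends) (hc : IsCubic ends)
    (h5 : TwoFactorsAllC5 ends) (havoid : ∀ e, ∃ F, IsTwoFactor ends F ∧ e ∉ F) :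
    ¬ HasCycle ends 3 := by
  intro hcycle
  obtain ⟨T⟩ := hcycle.nonempty_spokedTriangle hc
  choose F hF hspoke using fun i => havoid (T.spoke i)
  choose htip htip_corner g hgF hg using fun i =>
    T.exists_tip_edge hl hc (hF i) (h5 _ (hF i)) (hspoke i)
  have hg_succ : ∀ i, ends (g i) = s(T.tip (i + 1), T.tip (i + 1 + 1)) := fun i => by
    rw [hg, add_assoc, one_add_one_eq_two]
  have hg_ne_spoke : ∀ i j, g i ≠ T.spoke j := fun i j heq => by
    have hcorner : T.corner j ∈ ends (g i) := by simp [heq, T.ends_spoke]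
    rw [hg_succ, Sym2.mem_iff] at hcorner
    exact hcorner.elim (htip_corner i _ ·.symm) (htip_corner (i + 1) _ ·.symm)
  have htip_succ : ∀ i, T.tip i ≠ T.tip (i + 1) := fun i => by
    simpa [show i - 1 + 2 = i + 1 by ring] using htip (i - 1)
  have hg_ne : ∀ i, g i ≠ g (i + 1) := fun i heq => by
    have hmem : T.tip (i + 1) ∈ ends (g (i + 1)) := by simp [← heq, hg]
    rw [hg_succ, Sym2.mem_iff, add_assoc i, one_add_one_eq_two, zmod_three_add_two_add_one] at hmem
    exact hmem.elim (htip i) (htip_succ i ·.symm)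
  have hmem : ∀ i, g i ∈ F 0 := fun i => by
    have hmem_of_tip : T.tip 0 ∈ ends (g i) → g i ∈ F 0 := fun h =>
      (hF 0).mem_of_notMem_s6 hc (hspoke 0) (by simp [T.ends_spoke]) h (hg_ne_spoke i 0)
    rcases zmod_three_eq_or_eq_or_eq i 0 with rfl | h | h
    exacts [hgF 0, hmem_of_tip (by simp [hg, ← h]), hmem_of_tip (by simp [hg, ← h])]
  have hle := (hF 0).ncard_component_le_of_cycle hl (c := fun i => T.tip (i + 1)) hmem hg_succ hg_ne
  rw [h5 _ (hF 0)] at hle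
  omega

end Mg

theorem stmt6_general {V E : Type} [Finite V] [Finite E] (ends : E → Sym2 V)
    (hl : Mg.NoLoops ends) (hc : Mg.IsCubic ends) (hb : Mg.Bridgeless ends)
    (h5 : Mg.TwoFactorsAllC5 ends) : ¬ Mg.HasCycle ends 3 := by
  refine Mg.not_hasCycle_three_of_forall_exists_isTwoFactor hl hc h5 fun e => ?_
  obtain ⟨M, hM, he⟩ := Mg.exists_isPerfectMatching_mem hl hc hb e
  exact ⟨Mᶜ, hM.isTwoFactor_compl hc, fun heM => heM he⟩

theorem stmt6 {V E : Type} [Fintype V] [Fintype E] (ends : E → Sym2 V)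
    (hl : Mg.NoLoops ends) (hc : Mg.IsCubic ends) (hb : Mg.Bridgeless ends)
    (hconn : Mg.Connected ends) (h5 : Mg.TwoFactorsAllC5 ends) :
    ¬ Mg.HasCycle ends 3 :=
  stmt6_general ends hl hc hb h5
end
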